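/- Let α ∈ (0,1) be irrational and θ ∈ [0,1). Suppose there exist i ∈ ℤ, a strictly increasing sequence (n_k)_{k∈ℕ} of natural numbers, and finite words u_k such that each u_k is conjugate to s_{n_k} and the square u_k u_k occurs in v_{α,θ} adjacent to i. Then for every λ ∈ ℝ with λ ≠ 0 and every E ∈ ℂ, the only square-summable function u : ℤ → ℂ satisfying u(n+1) + u(n−1) + λ v_{α,θ}(n) u(n) = E u(n) for all n ∈ ℤ is u ≡ 0. -/

import Mathlib

/-!
A square `x x` in the potential gives, by Cayley–Hamilton for the transfer matrix `M` of `x`, the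
identity `w (c) + w (c + 2q) = tr M · w (c + q)` for every solution `w`, and the same identity one
site to the left (`IsSol.two_block`). If the traces along `s_{n_k}` are bounded and `u` decays,
squares of growing length adjacent to `i` force `u` to vanish at two consecutive sites near `i`,
hence everywhere.

It remains to bound the traces at an energy `E` carrying a nonzero square-summable solution. The
traces `tr (B A ^ p)` obey a three-term recursion in `p`. It preserves a quadratic form, and
whenever `|tr A| > 2` it gives growth (`rec_strict_growth`) and a maximum principle
(`rec_max_principle`). Consequently, either an open escape condition holds at `E`
(`Escapes`, `isOpen_escapes`), in which case all later traces exceed two in modulus on a whole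
neighbourhood of `E` (`Escapes.two_lt`), or the traces stay bounded (`trace_bounded`).

Escape is impossible. The Sturmian sequence is uniformly recurrent (`sturmian_urec`), so the words
`u_k`, being long factors, contain a copy of any given central window. Truncating the solution to
this window produces an approximate eigenvector of the symmetric operator on the cycle with
potential `u_k`, hence an exact eigenvalue `E'` near `E` (`exists_near_eigenvalue`), and at `E'`
the trace for `u_k`, which is that for `s_{n_k}`, equals `2` (`exists_energy`).
-/

/-- Partial quotients of the continued fraction expansion of `α ∈ (0,1)`:
`cfa α n = a_n` for `n ≥ 1`, computed via the Gauss map. -/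
noncomputable def cfa (α : ℝ) (n : ℕ) : ℕ :=
  ⌊((fun x : ℝ => Int.fract x⁻¹)^[n - 1] α)⁻¹⌋₊

/-- The standard Sturmian words, with index shifted by one:
`sw α (n+1)` is the word `s_n` of the paper (so `sw α 0 = s₋₁ = 1`, `sw α 1 = s₀ = 0`,
`sw α 2 = s₁ = s₀^(a₁-1) s₋₁`, and `s_n = s_{n-1}^{a_n} s_{n-2}` for `n ≥ 2`).
The letter `1` is encoded by `true` and `0` by `false`. -/
noncomputable def sw (α : ℝ) : ℕ → List Bool
  | 0 => [true]
  | 1 => [false]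
  | 2 => (List.replicate (cfa α 1 - 1) [false]).flatten ++ [true]
  | n + 3 => (List.replicate (cfa α (n + 2)) (sw α (n + 2))).flatten ++ sw α (n + 1)

/-- Denominators of the rational approximants: `q₀ = 1`, `q₁ = a₁`, `qₙ = aₙ q_{n-1} + q_{n-2}`. -/
noncomputable def qden (α : ℝ) : ℕ → ℕ
  | 0 => 1
  | 1 => cfa α 1
  | n + 2 => cfa α (n + 2) * qden α (n + 1) + qden α n

open scoped Classical in
/-- The Sturmian potential `v_{α,θ}(n) = χ_{[1-α,1)}(nα + θ mod 1)`, with value `1`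
encoded by `true` and `0` by `false` (note `Int.fract x < 1` always). -/
noncomputable def sturmian (α θ : ℝ) (n : ℤ) : Bool :=
  if 1 - α ≤ Int.fract ((n : ℝ) * α + θ) then true else false

/-- An `(n,α)`-partition of a two-sided sequence `f : ℤ → Bool`, given by the
break points `d : ℤ → ℤ` (interval `I_j = {d j, …, d (j+1) - 1}`) and blocks
`z : ℤ → List Bool`: the `d j` are strictly increasing, `0 ∈ I₀`, each block is
`s_n = sw α (n+1)` or `s_{n-1} = sw α n`, consecutive intervals are adjacent with
`I_j` of length `(z j).length`, and `f` restricted to `I_j` spells the word `z j`. -/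
def IsNPartition (α : ℝ) (n : ℕ) (f : ℤ → Bool) (d : ℤ → ℤ) (z : ℤ → List Bool) : Prop :=
  StrictMono d ∧
  (d 0 ≤ 0 ∧ 0 < d 1) ∧
  (∀ j : ℤ, z j = sw α (n + 1) ∨ z j = sw α n) ∧
  (∀ j : ℤ, d (j + 1) = d j + (z j).length) ∧
  (∀ j : ℤ, z j = (List.range (z j).length).map fun k => f (d j + (k : ℤ)))

/-- The finite word `x` occurs in the two-sided sequence `v` adjacent to `i`:
either `x = v_i v_{i+1} … v_{i+l-1}` or `x = v_{i-l+1} … v_{i-1} v_i`. -/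
def AdjacentTo (v : ℤ → Bool) (x : List Bool) (i : ℤ) : Prop :=
  x = ((List.range x.length).map fun k => v (i + (k : ℤ))) ∨
  x = ((List.range x.length).map fun k => v (i - (x.length : ℤ) + 1 + (k : ℤ)))

/-! ### Words, transfer matrices and the two-block identity -/

/-- The word `v_c v_{c+1} … v_{c+q-1}`. -/
def word (v : ℤ → Bool) (c : ℤ) (q : ℕ) : List Bool :=
  (List.range q).map fun k : ℕ => v (c + (k : ℤ))

theorem word_length (v : ℤ → Bool) (c : ℤ) (q : ℕ) : (word v c q).length = q := by
  simp [word]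

theorem word_add (v : ℤ → Bool) (c : ℤ) (p q : ℕ) :
    word v c (p + q) = word v c p ++ word v (c + p) q := by
  simp [word, List.range_add, Function.comp_def, add_assoc]

/-- The value of the potential at a site carrying the letter `b`. -/
noncomputable def pot (lam : ℝ) (b : Bool) : ℝ := lam * (if b then 1 else 0)

/-- The one-step transfer matrix, mapping `(w n, w (n-1))` to `(w (n+1), w n)` when `v n = b`. -/
noncomputable def tm (lam : ℝ) (E : ℂ) (b : Bool) : Matrix (Fin 2) (Fin 2) ℂ :=
  !![E - pot lam b, -1; 1, 0]

/-- The transfer matrix of a word; the first letter acts first, so it is the rightmost factor. -/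
noncomputable def tmw (lam : ℝ) (E : ℂ) : List Bool → Matrix (Fin 2) (Fin 2) ℂ
  | [] => 1
  | b :: w => tmw lam E w * tm lam E b

theorem tmw_append (lam : ℝ) (E : ℂ) (x y : List Bool) :
    tmw lam E (x ++ y) = tmw lam E y * tmw lam E x := by
  induction x with
  | nil => simp [tmw]
  | cons b x ih => simp [tmw, ih, mul_assoc]

theorem tmw_flatten (lam : ℝ) (E : ℂ) (x : List Bool) (p : ℕ) :
    tmw lam E (List.replicate p x).flatten = tmw lam E x ^ p := by
  induction p with
  | zero => simp [tmw]
  | succ p ih => rw [List.replicate_succ, List.flatten_cons, tmw_append, ih, pow_succ]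

theorem det_tmw (lam : ℝ) (E : ℂ) (w : List Bool) : (tmw lam E w).det = 1 := by
  induction w with
  | nil => simp [tmw]
  | cons b w ih => simp [tmw, ih, tm, Matrix.det_fin_two]

theorem continuous_tmw (lam : ℝ) (w : List Bool) : Continuous fun E => tmw lam E w := by
  induction w with
  | nil => exact continuous_const
  | cons b w ih =>
    refine ih.matrix_mul (continuous_matrix fun i j => ?_)
    fin_cases i <;> fin_cases j <;> simp [tm] <;> fun_prop

theorem cayley_hamilton_two (A : Matrix (Fin 2) (Fin 2) ℂ) (hA : A.det = 1) :
    A * A = A.trace • A - 1 := by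
  rw [Matrix.det_fin_two] at hA
  ext i j
  fin_cases i <;> fin_cases j <;>
    simp [Matrix.mul_apply, Fin.sum_univ_two, Matrix.trace_fin_two] <;> first | ring1 | linear_combination -hA

/-- `w` solves the difference equation with potential `pot lam ∘ v` at energy `E`. -/
def IsSol (lam : ℝ) (v : ℤ → Bool) (E : ℂ) (w : ℤ → ℂ) : Prop :=
  ∀ n : ℤ, w (n + 1) + w (n - 1) + pot lam (v n) * w n = E * w n

theorem IsSol.transfer {lam : ℝ} {v : ℤ → Bool} {E : ℂ} {w : ℤ → ℂ} (h : IsSol lam v E w)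
    (c : ℤ) (q : ℕ) :
    ![w (c + q), w (c + q - 1)] = (tmw lam E (word v c q)).mulVec ![w c, w (c - 1)] := by
  induction q with
  | zero => simp [word, tmw]
  | succ q ih =>
    have hw : word v (c + q) 1 = [v (c + q)] := by simp [word]
    rw [word_add, tmw_append, ← Matrix.mulVec_mulVec, ← ih, hw]
    have := h (c + q)
    ext j
    fin_cases j
    · simp [tmw, tm, Matrix.mulVec, dotProduct, Fin.sum_univ_two]
      rw [← add_assoc]
      linear_combination this
    · simp [tmw, tm, Matrix.mulVec, dotProduct, Fin.sum_univ_two]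
      congr 1; ring

/-- Cayley–Hamilton applied to the transfer matrix of one half of a square. -/
theorem IsSol.two_block {lam : ℝ} {v : ℤ → Bool} {E : ℂ} {w : ℤ → ℂ} (h : IsSol lam v E w)
    (c : ℤ) (q : ℕ) (hsq : word v (c + q) q = word v c q) :
    w c + w (c + q + q) = (tmw lam E (word v c q)).trace * w (c + q) ∧
    w (c - 1) + w (c + q + q - 1) = (tmw lam E (word v c q)).trace * w (c + q - 1) := by
  have h1 := h.transfer c q
  have h2 := h.transfer (c + q) q
  rw [hsq, h1, Matrix.mulVec_mulVec, cayley_hamilton_two _ (det_tmw _ _ _), Matrix.sub_mulVec,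
    Matrix.smul_mulVec, ← h1, Matrix.one_mulVec] at h2
  have e0 := congrFun h2 0
  have e1 := congrFun h2 1
  simp at e0 e1
  exact ⟨by rw [e0]; ring, by rw [e1]; ring⟩

/-- A solution vanishing at two consecutive sites vanishes identically. -/
theorem IsSol.eq_zero {lam : ℝ} {v : ℤ → Bool} {E : ℂ} {w : ℤ → ℂ} (h : IsSol lam v E w)
    (c : ℤ) (h0 : w c = 0) (h1 : w (c - 1) = 0) : w = 0 := by
  have key : ∀ n : ℤ, w n = 0 ∧ w (n - 1) = 0 := by
    intro n
    induction n using Int.inductionOn' (b := c) with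
    | zero => exact ⟨h0, h1⟩
    | succ k _ ih =>
      have := h k
      rw [ih.1, ih.2] at this
      exact ⟨by simpa using this, by simpa using ih.1⟩
    | pred k _ ih =>
      have := h (k - 1)
      rw [sub_add_cancel, ih.1, ih.2] at this
      exact ⟨ih.2, by simpa using this⟩
  funext n
  exact (key n).1

/-! ### Uniform recurrence of Sturmian sequences -/

/-- Uniform recurrence (at the origin): every window of `v` centred at `0` reappears with bounded gaps. -/
def URec (v : ℤ → Bool) : Prop :=
  ∀ L : ℕ, ∃ R : ℕ, ∀ c : ℤ, ∃ m : ℤ, c ≤ m ∧ m ≤ c + R ∧ ∀ j : ℤ, |j| ≤ L → v (m + j) = v j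

/-- As the coding interval is half-open, the letter at `j` is unchanged when the phase moves to the
right by a sufficiently small amount. -/
theorem sturmian_stable (α θ : ℝ) (j : ℤ) :
    ∃ ε > 0, ∀ (m n : ℤ) (e : ℝ), m * α = n + e → 0 ≤ e → e < ε →
      sturmian α θ (m + j) = sturmian α θ j := by
  have hx := Int.fract_lt_one ((j : ℝ) * α + θ)
  refine ⟨if 1 - α ≤ Int.fract ((j : ℝ) * α + θ) then 1 - Int.fract ((j : ℝ) * α + θ)
    else min (1 - Int.fract ((j : ℝ) * α + θ)) (1 - α - Int.fract ((j : ℝ) * α + θ)), ?_, ?_⟩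
  · split_ifs with h
    · linarith
    · exact lt_min (by linarith) (by linarith)
  · intro m n e hm he0 he
    have he1 : e < 1 - Int.fract ((j : ℝ) * α + θ) := by
      split_ifs at he with h
      · exact he
      · exact he.trans_le (min_le_left _ _)
    have hf : Int.fract (((m + j : ℤ) : ℝ) * α + θ) = Int.fract ((j : ℝ) * α + θ) + e := by
      rw [Int.fract_eq_iff]
      refine ⟨by linarith [Int.fract_nonneg ((j : ℝ) * α + θ)], by linarith,
        n + ⌊(j : ℝ) * α + θ⌋, ?_⟩
      have := Int.floor_add_fract ((j : ℝ) * α + θ)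
      push_cast
      linarith
    unfold sturmian
    rw [hf]
    split_ifs at he ⊢ with h h1 h2
    · rfl
    · linarith [min_le_right (1 - Int.fract ((j : ℝ) * α + θ))
        (1 - α - Int.fract ((j : ℝ) * α + θ))]
    · linarith
    · rfl

/-- Stepping by a `k` for which `k α` is slightly positive modulo one, the orbit of any starting point
enters `[0, η)` modulo one after boundedly many steps. -/
theorem sturmian_urec (α θ : ℝ) (hirr : Irrational α) : URec (sturmian α θ) := by
  intro L
  choose ε hε hst using sturmian_stable α θ
  obtain ⟨η, hη, hηle⟩ : ∃ η > 0, ∀ j : ℤ, |j| ≤ L → η ≤ ε j := by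
    have hne : (Finset.Icc (-(L : ℤ)) L).Nonempty := ⟨0, by simp⟩
    obtain ⟨j0, _, hj0⟩ := Finset.exists_min_image (Finset.Icc (-(L : ℤ)) L) ε hne
    exact ⟨ε j0, hε j0, fun j hj => hj0 j (by simpa using abs_le.1 hj)⟩
  -- a small positive step, an integer multiple of `α` modulo one (Dirichlet)
  obtain ⟨k, p, hδ0, hδη⟩ : ∃ k p : ℤ, 0 < (k : ℝ) * α - p ∧ (k : ℝ) * α - p < η := by
    obtain ⟨n, hn⟩ := exists_nat_one_div_lt hη
    obtain ⟨p, k, hk0, _, hkp⟩ := Real.exists_int_int_abs_mul_sub_le α (Nat.succ_pos n)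
    have hlt : |(k : ℝ) * α - p| < η := by
      refine (hkp.trans ?_).trans_lt hn
      apply one_div_le_one_div_of_le
      · positivity
      · push_cast; linarith
    have hne : (k : ℝ) * α - p ≠ 0 := by
      have := (hirr.intCast_mul hk0.ne').sub_intCast p
      exact this.ne_zero
    rcases lt_or_gt_of_ne hne with h | h
    · refine ⟨-k, -p, ?_, ?_⟩
      · push_cast; linarith
      · rw [abs_of_neg h] at hlt; push_cast; linarith
    · exact ⟨k, p, h, by rwa [abs_of_pos h] at hlt⟩
  set δ : ℝ := (k : ℝ) * α - p with hδ
  set T : ℕ := ⌈1 / δ⌉₊ with hT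
  refine ⟨2 * (T * k.natAbs), fun c => ?_⟩
  set c' : ℤ := c + T * |k| with hc'
  set f : ℝ := Int.fract ((c' : ℝ) * α) with hf
  have hf0 : 0 ≤ f := Int.fract_nonneg _
  have hf1 : f < 1 := Int.fract_lt_one _
  set t : ℕ := ⌈(1 - f) / δ⌉₊ with ht
  have htT : t ≤ T := Nat.ceil_le_ceil (by gcongr; linarith)
  have ht1 : 1 - f ≤ t * δ := by
    rw [← div_le_iff₀ hδ0]; exact Nat.le_ceil _
  have ht2 : t * δ < 1 - f + δ := by
    have := Nat.ceil_lt_add_one (a := (1 - f) / δ) (by apply div_nonneg <;> linarith)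
    calc t * δ < ((1 - f) / δ + 1) * δ := by gcongr
      _ = 1 - f + δ := by field_simp
  have habs : |(t : ℤ) * k| ≤ T * |k| := by
    rw [abs_mul, Nat.abs_cast]; gcongr
  rw [abs_le] at habs
  refine ⟨c' + t * k, by omega, by push_cast; omega, fun j hj => ?_⟩
  refine hst j (c' + t * k) (⌊(c' : ℝ) * α⌋ + t * p + 1) (f + t * δ - 1) ?_ (by linarith) ?_
  · have := Int.floor_add_fract ((c' : ℝ) * α)
    push_cast
    rw [hδ]
    linarith
  · linarith [hηle j hj]

/-! ### Periodic approximants -/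

/-- The Schrödinger operator with potential `V` on the cycle `ℤ/q`. -/
noncomputable def cyc (q : ℕ) (V : ZMod q → ℝ) [NeZero q] :
    EuclideanSpace ℂ (ZMod q) →ₗ[ℂ] EuclideanSpace ℂ (ZMod q) where
  toFun f := WithLp.toLp 2 fun x => f (x + 1) + f (x - 1) + V x * f x
  map_add' f g := by ext x; simp; ring
  map_smul' a f := by ext x; simp; ring

theorem cyc_isSymmetric (q : ℕ) (V : ZMod q → ℝ) [NeZero q] : (cyc q V).IsSymmetric := by
  intro f g
  have h1 : ∑ x, inner ℂ (f (x + 1)) (g x) = ∑ x, inner ℂ (f x) (g (x - 1)) := by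
    rw [← Equiv.sum_comp (Equiv.addRight (1 : ZMod q)) fun x => inner ℂ (f x) (g (x - 1))]
    simp
  have h2 : ∑ x, inner ℂ (f (x - 1)) (g x) = ∑ x, inner ℂ (f x) (g (x + 1)) := by
    rw [← Equiv.sum_comp (Equiv.subRight (1 : ZMod q)) fun x => inner ℂ (f x) (g (x + 1))]
    simp
  have h3 : ∀ x, inner ℂ ((V x : ℂ) * f x) (g x) = inner ℂ (f x) ((V x : ℂ) * g x) := by
    intro x
    simp
    ring
  simp only [PiLp.inner_apply, cyc, LinearMap.coe_mk, AddHom.coe_mk, inner_add_left,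
    inner_add_right, Finset.sum_add_distrib, h1, h2, h3]
  ring

/-- An `ε`-approximate eigenvector of a symmetric operator has an eigenvalue within `ε` of the energy,
which is allowed to be complex. -/
theorem exists_near_eigenvalue {q : ℕ} [NeZero q] (V : ZMod q → ℝ)
    (E : ℂ) (ψ : EuclideanSpace ℂ (ZMod q)) (hψ : ψ ≠ 0) (ε : ℝ) (hε : 0 < ε)
    (h : ‖cyc q V ψ - E • ψ‖ ^ 2 ≤ ε ^ 2 * ‖ψ‖ ^ 2) :
    ∃ E' : ℂ, ‖E' - E‖ ≤ ε ∧ ∃ φ : EuclideanSpace ℂ (ZMod q), φ ≠ 0 ∧ cyc q V φ = E' • φ := by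
  have hT := cyc_isSymmetric q V
  set b := hT.eigenvectorBasis rfl with hb
  by_contra! hcon
  have hfar : ∀ i, ε < ‖((hT.eigenvalues rfl i : ℝ) : ℂ) - E‖ := by
    intro i
    by_contra! hi
    exact hcon _ hi (b i) (b.orthonormal.ne_zero i) (hT.apply_eigenvectorBasis rfl i)
  have hn1 : ‖cyc q V ψ - E • ψ‖ ^ 2 =
      ∑ i, ‖((hT.eigenvalues rfl i : ℝ) : ℂ) - E‖ ^ 2 * ‖b.repr ψ i‖ ^ 2 := by
    rw [← b.repr.norm_map, EuclideanSpace.norm_sq_eq]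
    refine Finset.sum_congr rfl fun i _ => ?_
    rw [← mul_pow, ← norm_mul, map_sub, map_smul]
    congr 2
    have := hT.eigenvectorBasis_apply_self_apply rfl ψ i
    rw [← hb] at this
    simp only [PiLp.sub_apply, PiLp.smul_apply, smul_eq_mul, this]
    simp
    ring
  have hn2 : ‖ψ‖ ^ 2 = ∑ i, ‖b.repr ψ i‖ ^ 2 := by
    rw [← b.repr.norm_map, EuclideanSpace.norm_sq_eq]
  rw [hn1, hn2, Finset.mul_sum] at h
  obtain ⟨i0, hi0⟩ : ∃ i, b.repr ψ i ≠ 0 := by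
    by_contra! h0
    apply hψ
    apply b.repr.injective
    ext i
    simpa using h0 i
  refine absurd h (not_le.2 (Finset.sum_lt_sum (fun i _ => ?_) ⟨i0, Finset.mem_univ _, ?_⟩))
  · have := (hfar i).le
    gcongr
  · have := hfar i0
    have : 0 < ‖b.repr ψ i0‖ := norm_pos_iff.2 hi0
    gcongr

/-- The representative of `x : ZMod q` in the fundamental domain `[c, c + q)`. -/
def rep (q : ℕ) (c : ℤ) (x : ZMod q) : ℤ := c + (x - (c : ZMod q)).val

theorem rep_cast {q : ℕ} [NeZero q] (c : ℤ) (x : ZMod q) : ((rep q c x : ℤ) : ZMod q) = x := by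
  simp [rep]

theorem rep_mem {q : ℕ} [NeZero q] (c : ℤ) (x : ZMod q) : c ≤ rep q c x ∧ rep q c x < c + q := by
  have := ZMod.val_lt (x - (c : ZMod q))
  unfold rep
  omega

theorem rep_of_mem {q : ℕ} [NeZero q] (c n : ℤ) (h1 : c ≤ n) (h2 : n < c + q) :
    rep q c (n : ZMod q) = n := by
  unfold rep
  rw [← Int.cast_sub, ZMod.val_intCast, Int.emod_eq_of_lt (by omega) (by omega)]
  ring

/-- An eigenvector on the cycle unrolls to a periodic solution, so the transfer matrix over a period
fixes a nonzero vector; having determinant one, it has trace two. -/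
theorem trace_eq_two_of_eigenvector {lam : ℝ} {q : ℕ} [NeZero q] (v : ℤ → Bool) (c : ℤ) (E' : ℂ)
    (φ : EuclideanSpace ℂ (ZMod q)) (hφ : φ ≠ 0)
    (h : cyc q (fun x => pot lam (v (c + (x - (c : ZMod q)).val))) φ = E' • φ) :
    (tmw lam E' (word v c q)).trace = 2 := by
  set v' : ℤ → Bool := fun n => v (c + ((n : ZMod q) - (c : ZMod q)).val) with hv'
  set w : ℤ → ℂ := fun n => φ (n : ZMod q) with hw
  have hsol : IsSol lam v' E' w := by
    intro n
    have := congrArg (fun f : EuclideanSpace ℂ (ZMod q) => f (n : ZMod q)) h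
    simpa [cyc, hw, hv'] using this
  have hsq : word v' (c + q) q = word v' c q := by simp [word, hv']
  have hword : word v' c q = word v c q := by
    refine List.map_congr_left fun k hk => ?_
    have hk : k < q := List.mem_range.1 hk
    exact congrArg v (rep_of_mem c (c + k) (by omega) (by omega))
  have hb := hsol.two_block c q hsq
  rw [hword] at hb
  have e0 : w (c + q) = w c := by simp [hw]
  have e1 : w (c + q + q) = w c := by simp [hw]
  have e2 : w (c + q - 1) = w (c - 1) := by simp [hw]
  have e3 : w (c + q + q - 1) = w (c - 1) := by simp [hw]
  rw [e0, e1, e2, e3] at hb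
  by_contra hne
  have hne' : (tmw lam E' (word v c q)).trace - 2 ≠ 0 := sub_ne_zero.2 hne
  have hz := hsol.eq_zero c
    ((mul_eq_zero.1 (by linear_combination -hb.1 :
      ((tmw lam E' (word v c q)).trace - 2) * w c = 0)).resolve_left hne')
    ((mul_eq_zero.1 (by linear_combination -hb.2 :
      ((tmw lam E' (word v c q)).trace - 2) * w (c - 1) = 0)).resolve_left hne')
  apply hφ
  ext x
  obtain ⟨n, rfl⟩ := ZMod.intCast_surjective x
  exact congrFun hz n

/-- A function supported in the interior of the fundamental domain descends to the cycle compatibly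
with the shift. -/
theorem extend_succ {q : ℕ} [NeZero q] (c : ℤ) (g : ℤ → ℂ)
    (hg : ∀ n, (n ≤ c ∨ c + q - 1 ≤ n) → g n = 0) (x : ZMod q) :
    g (rep q c (x + 1)) = g (rep q c x + 1) := by
  have hx := rep_mem c x
  by_cases h : rep q c x + 1 < c + q
  · congr 1
    rw [← rep_of_mem (q := q) c (rep q c x + 1) (by omega) h]
    simp [rep_cast]
  · rw [hg (rep q c x + 1) (by omega)]
    apply hg
    left
    have e : x + 1 = ((c : ℤ) : ZMod q) := by
      rw [← rep_cast c x, show rep q c x = c + q - 1 by omega]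
      simp
    rw [e]
    simp [rep]

theorem extend_pred {q : ℕ} [NeZero q] (c : ℤ) (g : ℤ → ℂ)
    (hg : ∀ n, (n ≤ c ∨ c + q - 1 ≤ n) → g n = 0) (x : ZMod q) :
    g (rep q c (x - 1)) = g (rep q c x - 1) := by
  have hx := rep_mem c x
  have hx' := rep_mem c (x - 1)
  by_cases h : c ≤ rep q c x - 1
  · congr 1
    rw [← rep_of_mem (q := q) c (rep q c x - 1) h (by omega)]
    simp [rep_cast]
  · rw [hg (rep q c x - 1) (by omega)]
    apply hg
    right
    have e : x - 1 = ((c + q - 1 : ℤ) : ZMod q) := by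
      rw [← rep_cast c x, show rep q c x = c by omega]
      simp
    have := NeZero.pos q
    rw [e, rep_of_mem _ _ (by omega) (by omega)]

/-- If a uniformly recurrent potential has a nonzero decaying solution at energy `E`, then each long
factor, repeated periodically, has a periodic solution at an energy close to `E`: truncate the
solution and place it at a reappearance of the central window inside that factor. -/
theorem exists_energy {lam : ℝ} {v : ℤ → Bool} {E : ℂ} {u : ℤ → ℂ} (hrec : URec v)
    (h : IsSol lam v E u) (hdecay : ∀ ε > 0, ∃ N : ℕ, ∀ n : ℤ, (N : ℤ) ≤ |n| → ‖u n‖ < ε)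
    (hu : u ≠ 0) (ε : ℝ) (hε : 0 < ε) :
    ∃ N : ℕ, ∀ q ≥ N, ∀ c : ℤ, ∃ E' : ℂ, ‖E' - E‖ ≤ ε ∧ (tmw lam E' (word v c q)).trace = 2 := by
  obtain ⟨j0, hj0⟩ : ∃ j, u j ≠ 0 := by
    by_contra! h0
    exact hu (funext h0)
  have hpos : 0 < ‖u j0‖ := norm_pos_iff.2 hj0
  obtain ⟨N, hN⟩ := hdecay (ε * ‖u j0‖ / 2) (by positivity)
  set L : ℕ := max N j0.natAbs + 1 with hL
  have hLN : N ≤ L := by omega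
  have hLj : |j0| ≤ L := by rw [Int.abs_eq_natAbs]; omega
  have hL1 : 1 ≤ L := by omega
  clear_value L
  obtain ⟨R, hR⟩ := hrec L
  refine ⟨2 * L + R + 10, fun q hq c => ?_⟩
  have : NeZero q := ⟨by omega⟩
  obtain ⟨m, hm1, hm2, hm⟩ := hR (c + L + 2)
  -- the truncation of `u`, moved to the window around `m`
  set g : ℤ → ℂ := fun n => if |n - m| ≤ L then u (n - m) else 0 with hgdef
  have hg : ∀ n, (n ≤ c ∨ c + q - 1 ≤ n) → g n = 0 := by
    intro n hn
    simp only [hgdef]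
    rw [if_neg]
    rw [abs_le]
    omega
  set F : ℤ → ℂ := fun n => g (n + 1) + g (n - 1) + pot lam (v n) * g n - E * g n with hF
  have hF0 : ∀ n, n ≠ m + L → n ≠ m - L → n ≠ m + L + 1 → n ≠ m - L - 1 → F n = 0 := by
    intro n h1 h2 h3 h4
    simp only [hF, hgdef, abs_le]
    by_cases hin : -(L : ℤ) ≤ n - m ∧ n - m ≤ L
    · have hv := hm (n - m) (abs_le.2 hin)
      rw [add_sub_cancel] at hv
      rw [if_pos (by omega), if_pos (by omega), if_pos hin, hv]
      have := h (n - m)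
      rw [show n + 1 - m = n - m + 1 by ring, show n - 1 - m = n - m - 1 by ring]
      linear_combination this
    · rw [if_neg (by omega), if_neg (by omega), if_neg hin]
      simp
  have hFb : ∀ n, ‖F n‖ ≤ ε * ‖u j0‖ / 2 := by
    intro n
    have hv := hm (n - m)
    rw [add_sub_cancel] at hv
    have hs := h (n - m)
    by_cases h1 : n = m + L
    · have e : F n = - u (L + 1) := by
        simp only [hF, hgdef, abs_le]
        rw [if_neg (by omega), if_pos (by omega), if_pos (by omega), hv (abs_le.2 (by omega))]
        rw [h1] at hs ⊢
        ring_nf at hs ⊢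
        linear_combination hs
      rw [e, norm_neg]
      exact (hN _ (le_abs.2 (by omega))).le
    by_cases h2 : n = m - L
    · have e : F n = - u (-L - 1) := by
        simp only [hF, hgdef, abs_le]
        rw [if_pos (by omega), if_neg (by omega), if_pos (by omega), hv (abs_le.2 (by omega))]
        rw [h2] at hs ⊢
        ring_nf at hs ⊢
        linear_combination hs
      rw [e, norm_neg]
      exact (hN _ (le_abs.2 (by omega))).le
    by_cases h3 : n = m + L + 1
    · have e : F n = u L := by
        simp only [hF, hgdef, abs_le]
        rw [if_neg (by omega), if_pos (by omega), if_neg (by omega), h3]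
        ring_nf
      rw [e]
      exact (hN _ (le_abs.2 (by omega))).le
    by_cases h4 : n = m - L - 1
    · have e : F n = u (-L) := by
        simp only [hF, hgdef, abs_le]
        rw [if_pos (by omega), if_neg (by omega), if_neg (by omega), h4]
        ring_nf
      rw [e]
      exact (hN _ (le_abs.2 (by omega))).le
    rw [hF0 n h1 h2 h3 h4, norm_zero]
    positivity
  set V : ZMod q → ℝ := fun x => pot lam (v (c + (x - (c : ZMod q)).val)) with hV
  set ψ : EuclideanSpace ℂ (ZMod q) := WithLp.toLp 2 fun x => g (rep q c x) with hψ
  have hψj : ψ ((m + j0 : ℤ) : ZMod q) = u j0 := by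
    rw [abs_le] at hLj
    simp only [hψ]
    rw [rep_of_mem c _ (by omega) (by omega)]
    simp only [hgdef, add_sub_cancel_left]
    rw [if_pos (abs_le.2 hLj)]
  have hψ0 : ψ ≠ 0 := by
    intro h0
    rw [h0] at hψj
    exact hj0 hψj.symm
  have hψn : ‖u j0‖ ^ 2 ≤ ‖ψ‖ ^ 2 := by
    rw [EuclideanSpace.norm_sq_eq, ← hψj]
    exact Finset.single_le_sum (f := fun x => ‖ψ x‖ ^ 2) (fun _ _ => by positivity)
      (Finset.mem_univ _)
  have hres : ‖cyc q V ψ - E • ψ‖ ^ 2 ≤ ε ^ 2 * ‖ψ‖ ^ 2 := by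
    have hpt : ∀ x, (cyc q V ψ - E • ψ) x = F (rep q c x) := by
      intro x
      simp only [cyc, hψ, hF, LinearMap.coe_mk, AddHom.coe_mk, PiLp.sub_apply, PiLp.smul_apply,
        smul_eq_mul, extend_succ c g hg, extend_pred c g hg, hV]
      rfl
    set S : Finset ℤ := {m + (L : ℤ), m - (L : ℤ), m + (L : ℤ) + 1, m - (L : ℤ) - 1} with hS
    have hinj : Set.InjOn (rep q c) (Finset.univ : Finset (ZMod q)) := by
      intro x _ y _ hxy
      rw [← rep_cast c x, hxy, rep_cast]
    calc ‖cyc q V ψ - E • ψ‖ ^ 2 = ∑ x, ‖F (rep q c x)‖ ^ 2 := by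
          rw [EuclideanSpace.norm_sq_eq]
          exact Finset.sum_congr rfl fun x _ => by rw [hpt]
      _ = ∑ n ∈ Finset.univ.image (rep q c), ‖F n‖ ^ 2 :=
          (Finset.sum_image (f := fun n => ‖F n‖ ^ 2) hinj).symm
      _ ≤ ∑ n ∈ Finset.univ.image (rep q c) ∪ S, ‖F n‖ ^ 2 :=
          Finset.sum_le_sum_of_subset_of_nonneg Finset.subset_union_left fun _ _ _ => by positivity
      _ = ∑ n ∈ S, ‖F n‖ ^ 2 := by
          refine (Finset.sum_subset Finset.subset_union_right fun n _ hn => ?_).symm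
          simp only [hS, Finset.mem_insert, Finset.mem_singleton, not_or] at hn
          rw [hF0 n hn.1 hn.2.1 hn.2.2.1 hn.2.2.2]
          simp
      _ ≤ ∑ n ∈ S, (ε * ‖u j0‖ / 2) ^ 2 :=
          Finset.sum_le_sum fun n _ => by have := hFb n; gcongr
      _ ≤ 4 * (ε * ‖u j0‖ / 2) ^ 2 := by
          rw [Finset.sum_const, nsmul_eq_mul]
          have : (S.card : ℝ) ≤ 4 := by exact_mod_cast Finset.card_le_four
          gcongr
      _ = ε ^ 2 * ‖u j0‖ ^ 2 := by ring
      _ ≤ ε ^ 2 * ‖ψ‖ ^ 2 := by gcongr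
  obtain ⟨E', hE', φ, hφ, hφe⟩ := exists_near_eigenvalue V E ψ hψ0 ε hε hres
  exact ⟨E', hE', trace_eq_two_of_eigenvector v c E' φ hφ hφe⟩

/-! ### The trace recursion -/

theorem rec_strict_growth {t : ℕ → ℂ} {y : ℂ} (ht : ∀ p, t (p + 2) = y * t (p + 1) - t p)
    (hy : 2 < ‖y‖) (h01 : ‖t 0‖ < ‖t 1‖) (p : ℕ) : ‖t p‖ < ‖t (p + 1)‖ := by
  induction p with
  | zero => exact h01
  | succ p ih =>
    have h1 : ‖y‖ * ‖t (p + 1)‖ - ‖t p‖ ≤ ‖t (p + 2)‖ := by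
      rw [ht, ← norm_mul]; exact norm_sub_norm_le _ _
    have := norm_nonneg (t p)
    change ‖t (p + 1)‖ < ‖t (p + 2)‖
    nlinarith

theorem rec_max_principle {t : ℕ → ℂ} {y : ℂ} (ht : ∀ p, t (p + 2) = y * t (p + 1) - t p)
    (hy : 2 < ‖y‖) (p : ℕ) : ‖t p‖ ≤ max ‖t 0‖ ‖t (p + 1)‖ := by
  induction p with
  | zero => exact le_max_left _ _
  | succ p ih =>
    rcases le_or_gt ‖t (p + 1)‖ ‖t 0‖ with h | h
    · exact h.trans (le_max_left _ _)
    · rw [max_eq_right h.le] at ih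
      have h1 : ‖y‖ * ‖t (p + 1)‖ - ‖t p‖ ≤ ‖t (p + 2)‖ := by
        rw [ht, ← norm_mul]; exact norm_sub_norm_le _ _
      have := norm_nonneg (t (p + 1))
      exact le_max_of_le_right (by change ‖t (p + 1)‖ ≤ ‖t (p + 2)‖; nlinarith)

/-- The quadratic form preserved by the recursion; it yields the Fricke–Vogt invariant. -/
theorem rec_invariant {t : ℕ → ℂ} {y : ℂ} (ht : ∀ p, t (p + 2) = y * t (p + 1) - t p) (p : ℕ) :
    t p ^ 2 + t (p + 1) ^ 2 - y * t p * t (p + 1) = t 0 ^ 2 + t 1 ^ 2 - y * t 0 * t 1 := by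
  induction p with
  | zero => simp
  | succ p ih =>
    rw [← ih, show p + 1 + 1 = p + 2 from rfl, ht]
    ring

/-! ### Standard words and their traces -/

theorem gauss_iterate_mem {α : ℝ} (hα0 : 0 < α) (hα1 : α < 1) (hirr : Irrational α) (n : ℕ) :
    0 < (fun x : ℝ => Int.fract x⁻¹)^[n] α ∧ (fun x : ℝ => Int.fract x⁻¹)^[n] α < 1 ∧
      Irrational ((fun x : ℝ => Int.fract x⁻¹)^[n] α) := by
  induction n with
  | zero => exact ⟨hα0, hα1, hirr⟩
  | succ n ih =>
    rw [Function.iterate_succ_apply']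
    have h : Irrational (Int.fract ((fun x : ℝ => Int.fract x⁻¹)^[n] α)⁻¹) :=
      (irrational_inv_iff.2 ih.2.2).sub_intCast _
    exact ⟨lt_of_le_of_ne (Int.fract_nonneg _) h.ne_zero.symm, Int.fract_lt_one _, h⟩

theorem one_le_cfa {α : ℝ} (hα0 : 0 < α) (hα1 : α < 1) (hirr : Irrational α) (n : ℕ) :
    1 ≤ cfa α n := by
  obtain ⟨h0, h1, _⟩ := gauss_iterate_mem hα0 hα1 hirr (n - 1)
  unfold cfa
  rw [Nat.one_le_floor_iff]
  exact (one_le_inv₀ h0).2 h1.le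

theorem sw_add_two (α : ℝ) (n : ℕ) (hn : 1 ≤ n) :
    sw α (n + 2) = (List.replicate (cfa α (n + 1)) (sw α (n + 1))).flatten ++ sw α n := by
  obtain ⟨n, rfl⟩ := Nat.exists_eq_add_of_le' hn
  rw [sw]

theorem le_length_sw {α : ℝ} (hα0 : 0 < α) (hα1 : α < 1) (hirr : Irrational α) (n : ℕ) :
    n ≤ (sw α (n + 1)).length ∧ 1 ≤ (sw α (n + 1)).length := by
  induction n using Nat.twoStepInduction with
  | zero => simp [sw]
  | one => simp [sw]
  | more n ih1 ih2 =>
    rw [show n + 2 + 1 = (n + 1) + 2 by ring, sw_add_two _ _ (by omega)]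
    have ha := one_le_cfa hα0 hα1 hirr (n + 1 + 1)
    have : (sw α (n + 1 + 1)).length ≤ cfa α (n + 1 + 1) * (sw α (n + 1 + 1)).length :=
      Nat.le_mul_of_pos_left _ ha
    simp only [List.length_append, List.length_flatten, List.map_replicate, List.sum_replicate,
      smul_eq_mul]
    omega

/-- The trace of the transfer matrix of `sw α n`. -/
noncomputable def xtr (lam : ℝ) (α : ℝ) (E : ℂ) (n : ℕ) : ℂ := (tmw lam E (sw α n)).trace

/-- The trace of the product of the transfer matrices of `sw α n` and `sw α (n + 1)`. -/
noncomputable def ztr (lam : ℝ) (α : ℝ) (E : ℂ) (n : ℕ) : ℂ :=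
  (tmw lam E (sw α n) * tmw lam E (sw α (n + 1))).trace

/-- With `B`, `A` the transfer matrices of `sw α n`, `sw α (n + 1)`, the sequence is
`t p = tr (B A ^ p)`. The case `n = 0` is excluded because `sw α 2` has exponent `a₁ - 1`. -/
theorem trace_step (lam α : ℝ) (E : ℂ) (n : ℕ) (hn : 1 ≤ n) :
    ∃ t : ℕ → ℂ, (∀ p, t (p + 2) = xtr lam α E (n + 1) * t (p + 1) - t p) ∧
      t 0 = xtr lam α E n ∧ t 1 = ztr lam α E n ∧ t (cfa α (n + 1)) = xtr lam α E (n + 2) ∧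
      t (cfa α (n + 1) + 1) = ztr lam α E (n + 1) := by
  have hM : tmw lam E (sw α (n + 2)) =
      tmw lam E (sw α n) * tmw lam E (sw α (n + 1)) ^ cfa α (n + 1) := by
    rw [sw_add_two α n hn, tmw_append, tmw_flatten]
  refine ⟨fun p => (tmw lam E (sw α n) * tmw lam E (sw α (n + 1)) ^ p).trace, fun p => ?_,
    by simp [xtr], by simp [ztr], by simp [xtr, hM], ?_⟩
  · have := cayley_hamilton_two _ (det_tmw lam E (sw α (n + 1)))
    simp only [pow_add _ p 2, pow_two, pow_add _ p 1, pow_one]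
    rw [this, xtr, mul_sub, mul_sub, mul_one, mul_smul_comm, mul_smul_comm, Matrix.trace_sub,
      Matrix.trace_smul, smul_eq_mul]
  · simp only [ztr]
    rw [hM, Matrix.trace_mul_comm (tmw lam E (sw α (n + 1))), pow_succ, mul_assoc]

/-- An open condition on the energy which persists under the trace recursion and forces all later
traces to exceed two in modulus. -/
def Escapes (lam : ℝ) (α : ℝ) (n : ℕ) (E : ℂ) : Prop :=
  2 < ‖xtr lam α E (n + 1)‖ ∧ 2 < ‖ztr lam α E n‖ ∧ ‖xtr lam α E n‖ < ‖ztr lam α E n‖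

theorem Escapes.succ {lam α : ℝ} {n : ℕ} {E : ℂ} (h : Escapes lam α n E) (hn : 1 ≤ n)
    (ha : 1 ≤ cfa α (n + 1)) : Escapes lam α (n + 1) E := by
  obtain ⟨t, ht, t0, t1, ta, ta1⟩ := trace_step lam α E n hn
  obtain ⟨h1, h2, h3⟩ := h
  rw [← t0, ← t1] at h3
  rw [← t1] at h2
  have hg := rec_strict_growth ht h1 h3
  obtain ⟨a, hae⟩ := Nat.exists_eq_add_of_le' ha
  rw [hae] at ta ta1
  have hmono : StrictMono fun p => ‖t p‖ := strictMono_nat_of_lt_succ hg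
  have hta : 2 < ‖t (a + 1)‖ := h2.trans_le (hmono.monotone (by omega : 1 ≤ a + 1))
  have hlow : ‖xtr lam α E (n + 1)‖ * ‖t (a + 1)‖ - ‖t a‖ ≤ ‖t (a + 2)‖ := by
    rw [ht, ← norm_mul]; exact norm_sub_norm_le _ _
  have hga := hg a
  have hga1 : ‖t (a + 1)‖ < ‖t (a + 2)‖ := hg (a + 1)
  refine ⟨?_, ?_, ?_⟩
  · change 2 < ‖xtr lam α E (n + 2)‖
    rwa [← ta]
  · rw [← ta1]; exact hta.trans hga1
  · rw [← ta1]
    change _ < ‖t (a + 2)‖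
    nlinarith

theorem Escapes.two_lt {lam α : ℝ} {n : ℕ} {E : ℂ} (h : Escapes lam α n E) (hn : 1 ≤ n)
    (ha : ∀ m, 1 ≤ cfa α m) (m : ℕ) (hm : n ≤ m) : 2 < ‖xtr lam α E (m + 1)‖ := by
  have : Escapes lam α m E := by
    induction m, hm using Nat.le_induction with
    | base => exact h
    | succ m hm ih => exact ih.succ (hn.trans hm) (ha _)
  exact this.1

theorem isOpen_escapes (lam α : ℝ) (n : ℕ) : IsOpen {E | Escapes lam α n E} := by
  have hx : ∀ n, Continuous fun E => ‖xtr lam α E n‖ := fun n =>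
    (continuous_tmw lam (sw α n)).matrix_trace.norm
  have hz : Continuous fun E => ‖ztr lam α E n‖ :=
    ((continuous_tmw lam (sw α n)).matrix_mul (continuous_tmw lam (sw α (n + 1)))).matrix_trace.norm
  exact (isOpen_lt continuous_const (hx (n + 1))).inter
    ((isOpen_lt continuous_const hz).inter (isOpen_lt (hx n) hz))

/-- Without escape the traces stay bounded: if `|x_{n+2}| > 2`, then either the invariant bounds
`x_{n+2}`, both neighbouring traces having modulus at most two, or the maximum principle gives
`|x_{n+2}| ≤ max |x_n| |x_{n+1}|`. -/
theorem trace_bounded {lam α : ℝ} {E : ℂ} (hne : ∀ n, 1 ≤ n → ¬ Escapes lam α n E) :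
    ∃ K : ℝ, ∀ n, 1 ≤ n → ‖xtr lam α E n‖ ≤ K := by
  set I : ℕ → ℂ := fun n => xtr lam α E (n + 1) ^ 2 + (xtr lam α E n ^ 2 + ztr lam α E n ^ 2
    - xtr lam α E (n + 1) * xtr lam α E n * ztr lam α E n) with hI
  have hinv : ∀ n, 1 ≤ n → I n = I 1 := by
    intro n hn
    induction n, hn using Nat.le_induction with
    | base => rfl
    | succ n hn ih =>
      obtain ⟨t, ht, t0, t1, ta, ta1⟩ := trace_step lam α E n hn
      have := rec_invariant ht (cfa α (n + 1))
      rw [t0, t1, ta, ta1] at this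
      rw [← ih]
      simp only [hI]
      linear_combination this
  set K : ℝ := max (6 + ‖I 1‖) (max ‖xtr lam α E 1‖ ‖xtr lam α E 2‖) with hK
  have hKI : 6 + ‖I 1‖ ≤ K := le_max_left _ _
  have hI0 := norm_nonneg (I 1)
  have key : ∀ n, ‖xtr lam α E (n + 1)‖ ≤ K ∧ ‖xtr lam α E (n + 2)‖ ≤ K := by
    intro n
    induction n with
    | zero => exact ⟨by simp [hK], by simp [hK]⟩
    | succ n ih =>
      refine ⟨ih.2, ?_⟩
      change ‖xtr lam α E (n + 3)‖ ≤ K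
      have hf := hne (n + 2) (by omega)
      obtain ⟨t, ht, t0, t1, ta, ta1⟩ := trace_step lam α E (n + 1) (by omega)
      by_contra! hbig
      have hz : ‖ztr lam α E (n + 2)‖ ≤ max 2 ‖xtr lam α E (n + 2)‖ := by
        by_contra! hz
        exact hf ⟨by change 2 < ‖xtr lam α E (n + 3)‖; linarith, (le_max_left _ _).trans_lt hz,
          (le_max_right _ _).trans_lt hz⟩
      rcases le_or_gt ‖xtr lam α E (n + 2)‖ 2 with hy | hy
      · rw [max_eq_left hy] at hz
        have hi := hinv (n + 2) (by omega)
        simp only [hI] at hi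
        change xtr lam α E (n + 3) ^ 2 + (xtr lam α E (n + 2) ^ 2 + ztr lam α E (n + 2) ^ 2
          - xtr lam α E (n + 3) * xtr lam α E (n + 2) * ztr lam α E (n + 2)) = I 1 at hi
        generalize xtr lam α E (n + 3) = x at *
        generalize xtr lam α E (n + 2) = y at *
        generalize ztr lam α E (n + 2) = z at *
        have hx2 : x ^ 2 = I 1 - y ^ 2 - z ^ 2 + x * y * z := by linear_combination hi
        have hn : ‖x‖ ^ 2 ≤ ‖I 1‖ + ‖y‖ ^ 2 + ‖z‖ ^ 2 + ‖x‖ * ‖y‖ * ‖z‖ := by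
          rw [← norm_pow, hx2, ← norm_pow, ← norm_pow, ← norm_mul, ← norm_mul]
          exact (norm_add_le _ _).trans (add_le_add_left
            ((norm_sub_le _ _).trans (add_le_add_left (norm_sub_le _ _) _)) _)
        have hy2 : ‖y‖ ^ 2 ≤ 4 := by nlinarith [norm_nonneg y]
        have hz2 : ‖z‖ ^ 2 ≤ 4 := by nlinarith [norm_nonneg z]
        have hyz : ‖y‖ * ‖z‖ ≤ 4 := by nlinarith [norm_nonneg y, norm_nonneg z]
        have hxyz : ‖x‖ * ‖y‖ * ‖z‖ ≤ ‖x‖ * 4 := by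
          rw [mul_assoc]; gcongr
        nlinarith
      · rw [max_eq_right hy.le] at hz
        have := rec_max_principle ht hy (cfa α (n + 1 + 1))
        rw [ta, ta1, t0] at this
        have h3 : max ‖xtr lam α E (n + 1)‖ ‖ztr lam α E (n + 2)‖ ≤ K :=
          max_le ih.1 (hz.trans ih.2)
        exact absurd (this.trans h3) (not_le.2 hbig)
  refine ⟨K, fun n hn => ?_⟩
  obtain ⟨n, rfl⟩ := Nat.exists_eq_add_of_le' hn
  exact (key n).1

/-! ### Conjugates, squares and decay -/

/-- Conjugate words have transfer matrices of equal trace. -/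
theorem trace_eq_of_conj (lam : ℝ) (E : ℂ) (x s : List Bool) (hlen : x.length = s.length)
    (h : x <:+: s ++ s) : (tmw lam E x).trace = (tmw lam E s).trace := by
  obtain ⟨p, r, hpr⟩ := h
  have hl := congrArg List.length hpr
  simp only [List.length_append] at hl
  have hps : p.length ≤ s.length := by omega
  have hp : p = s.take p.length := by
    have := congrArg (List.take p.length) hpr
    simpa [List.take_append, Nat.sub_eq_zero_of_le hps] using this
  have hx : x = s.drop p.length ++ s.take p.length := by
    have h1 := congrArg (List.drop p.length) hpr
    rw [List.append_assoc, List.drop_left, List.drop_append_of_le_length hps] at h1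
    have h2 := congrArg (List.take x.length) h1
    rw [List.take_left, List.take_append, List.length_drop, hlen,
      Nat.sub_sub_self hps] at h2
    rw [h2]
    congr 1
    exact List.take_of_length_le (by simp)
  conv_rhs => rw [← List.take_append_drop p.length s]
  rw [hx, tmw_append, tmw_append, Matrix.trace_mul_comm]

theorem exists_square_of_adjacentTo {v : ℤ → Bool} {x : List Bool} {i : ℤ}
    (h : AdjacentTo v (x ++ x) i) :
    ∃ c : ℤ, (c = i ∨ c + x.length + x.length = i + 1) ∧
      word v c x.length = x ∧ word v (c + x.length) x.length = x := by
  have key : ∀ c : ℤ, x ++ x = word v c (x.length + x.length) →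
      word v c x.length = x ∧ word v (c + x.length) x.length = x := by
    intro c hc
    rw [word_add] at hc
    have := List.append_inj hc (by simp [word_length])
    exact ⟨this.1.symm, this.2.symm⟩
  have conv : ∀ (c : ℤ) (q : ℕ), ((List.range q).map fun k => v (c + (k : ℤ))) = word v c q := by
    intro c q
    -- the natural numbers of the range are coerced to integers before `v` is applied
    simp only [word, List.pure_def, List.bind_eq_flatMap]
    rw [← List.map_eq_flatMap, List.map_map]
    rfl
  rcases h with h | h
  · rw [conv, List.length_append] at h
    exact ⟨i, Or.inl rfl, key i h⟩
  · rw [conv, List.length_append] at h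
    exact ⟨_, Or.inr (by push_cast; ring), key _ h⟩

theorem decay_of_summable {u : ℤ → ℂ} (hu : Summable fun n : ℤ => ‖u n‖ ^ 2) (ε : ℝ) (hε : 0 < ε) :
    ∃ N : ℕ, ∀ n : ℤ, (N : ℤ) ≤ |n| → ‖u n‖ < ε := by
  have h := hu.tendsto_cofinite_zero.eventually (gt_mem_nhds (by positivity : 0 < ε ^ 2))
  rw [Int.cofinite_eq, Filter.eventually_sup, Filter.eventually_atBot,
    Filter.eventually_atTop] at h
  obtain ⟨⟨a, ha⟩, ⟨b, hb⟩⟩ := h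
  refine ⟨a.natAbs + b.natAbs, fun n hn => ?_⟩
  refine lt_of_pow_lt_pow_left₀ 2 hε.le ?_
  rcases le_abs.1 hn with h | h
  · exact hb n (by omega)
  · exact ha n (by omega)

/-- The two-block criterion: if `v_{α,θ}` contains infinitely many squares `uₖuₖ`
adjacent to some fixed site `i ∈ ℤ`, with `uₖ` conjugate to `s_{nₖ}` (same length and
a subword of `s_{nₖ} s_{nₖ}`) for a strictly increasing sequence `nₖ`, then for every
`λ ≠ 0` the operator `H_{λ,α,θ}` has no eigenvalues. -/
theorem absence_of_eigenvalues_of_squares_adjacent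
    (α : ℝ) (hα0 : 0 < α) (hα1 : α < 1) (hirr : Irrational α)
    (θ : ℝ) (hθ0 : 0 ≤ θ) (hθ1 : θ < 1)
    (i : ℤ) (nk : ℕ → ℕ) (hnk : StrictMono nk) (uk : ℕ → List Bool)
    (hconj : ∀ k : ℕ, (uk k).length = (sw α (nk k + 1)).length ∧
      uk k <:+: sw α (nk k + 1) ++ sw α (nk k + 1))
    (hocc : ∀ k : ℕ, AdjacentTo (sturmian α θ) (uk k ++ uk k) i)
    (lam : ℝ) (hlam : lam ≠ 0) (E : ℂ) (u : ℤ → ℂ)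
    (hu : Summable fun n : ℤ => ‖u n‖ ^ 2)
    (heq : ∀ n : ℤ, u (n + 1) + u (n - 1)
      + (lam : ℂ) * (if sturmian α θ n then 1 else 0) * u n = E * u n) :
    u = 0 := by
  have hsol : IsSol lam (sturmian α θ) E u := by
    intro n
    have hp : ((pot lam (sturmian α θ n) : ℝ) : ℂ)
        = (lam : ℂ) * (if sturmian α θ n then 1 else 0) := by
      unfold pot; split_ifs <;> simp
    rw [hp]
    exact heq n
  have ha := one_le_cfa hα0 hα1 hirr
  have hdecay := decay_of_summable hu
  by_contra hu0
  have hlen : ∀ k, k ≤ (uk k).length := fun k =>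
    ((hnk.id_le k).trans (le_length_sw hα0 hα1 hirr (nk k)).1).trans_eq (hconj k).1.symm
  have htr : ∀ k E', (tmw lam E' (uk k)).trace = xtr lam α E' (nk k + 1) := fun k E' =>
    trace_eq_of_conj lam E' _ _ (hconj k).1 (hconj k).2
  choose c hc hw1 hw2 using fun k => exists_square_of_adjacentTo (hocc k)
  -- No escape at `E`: otherwise a periodic approximant would have an eigenvalue near `E`, where
  -- all large traces exceed `2`.
  have hne : ∀ n, 1 ≤ n → ¬ Escapes lam α n E := by
    intro n hn hesc
    obtain ⟨ε, hε, hball⟩ := Metric.isOpen_iff.1 (isOpen_escapes lam α n) E hesc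
    obtain ⟨N, hN⟩ := exists_energy (sturmian_urec α θ hirr) hsol hdecay hu0 (ε / 2) (half_pos hε)
    obtain ⟨E', hE', htwo⟩ := hN (uk (max N n)).length ((le_max_left N n).trans (hlen _))
      (c (max N n))
    rw [hw1, htr] at htwo
    have hesc' : Escapes lam α n E' := hball (by
      rw [Metric.mem_ball, dist_eq_norm]; linarith)
    have := hesc'.two_lt hn ha (nk (max N n)) ((le_max_right N n).trans (hnk.id_le _))
    rw [htwo] at this
    norm_num at this
  obtain ⟨K, hK⟩ := trace_bounded hne
  have hK0 : 0 ≤ K := (norm_nonneg _).trans (hK 1 le_rfl)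
  have hnz : ∀ j : ℤ, 0 < max ‖u j‖ ‖u (j - 1)‖ := by
    intro j
    by_contra! h
    have h1 := (le_max_left _ _).trans h
    have h2 := (le_max_right _ _).trans h
    exact hu0 (hsol.eq_zero j (norm_le_zero_iff.1 h1) (norm_le_zero_iff.1 h2))
  set δ : ℝ := min (max ‖u i‖ ‖u (i - 1)‖) (max ‖u (i + 1)‖ ‖u i‖) with hδ
  have hδ0 : 0 < δ := lt_min (hnz i) (by simpa using hnz (i + 1))
  obtain ⟨N, hN⟩ := hdecay (δ / (K + 1)) (by positivity)
  set k : ℕ := N + i.natAbs + 5 with hk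
  have hq := hlen k
  have hblock := hsol.two_block (c k) (uk k).length (by rw [hw1, hw2])
  rw [hw1, htr] at hblock
  have hT := hK (nk k + 1) (by omega)
  -- three sites in arithmetic progression, two of which are far out
  have bound : ∀ x y z : ℤ, (N : ℤ) ≤ |y| → (N : ℤ) ≤ |z| →
      u x = xtr lam α E (nk k + 1) * u y - u z → ‖u x‖ < δ := by
    intro x y z hy hz h
    have h1 := hN y hy
    have h2 := hN z hz
    calc ‖u x‖ ≤ ‖xtr lam α E (nk k + 1)‖ * ‖u y‖ + ‖u z‖ := by
          rw [h, ← norm_mul]; exact norm_sub_le _ _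
      _ ≤ K * ‖u y‖ + ‖u z‖ := by gcongr
      _ < K * (δ / (K + 1)) + δ / (K + 1) := by
          have : K * ‖u y‖ ≤ K * (δ / (K + 1)) := by gcongr
          linarith
      _ = δ := by field_simp
  rcases hc k with h | h
  · have h1 := bound (c k) (c k + (uk k).length) (c k + (uk k).length + (uk k).length)
      (le_abs.2 (by omega)) (le_abs.2 (by omega)) (by linear_combination hblock.1)
    have h2 := bound (c k - 1) (c k + (uk k).length - 1) (c k + (uk k).length + (uk k).length - 1)
      (le_abs.2 (by omega)) (le_abs.2 (by omega)) (by linear_combination hblock.2)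
    rw [h] at h1 h2
    exact absurd (max_lt h1 h2) (not_lt.2 (min_le_left _ _))
  · have h1 := bound (c k + (uk k).length + (uk k).length) (c k + (uk k).length) (c k)
      (le_abs.2 (by omega)) (le_abs.2 (by omega)) (by linear_combination hblock.1)
    have h2 := bound (c k + (uk k).length + (uk k).length - 1) (c k + (uk k).length - 1) (c k - 1)
      (le_abs.2 (by omega)) (le_abs.2 (by omega)) (by linear_combination hblock.2)
    rw [h] at h1 h2
    rw [add_sub_cancel_right] at h2
    exact absurd (max_lt h1 h2) (not_lt.2 (min_le_right _ _))
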